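/- arXiv:0907.0887 — 2 statements merged into one kernel-verified Lean document; each statement's English description precedes it below -/
import Mathlib

section
/- There is a constant C > 0, depending only on d and Γ, such that: for every m ≤ d−1, every lattice r-subspace V ∈ 𝒱(r,m), every θ ∈ Θ_r with θ ∉ V, and every ξ ∈ V + ℝθ, one has |ξ| ≤ C r^d (|ξ_θ| + |ξ_V|). -/
noncomputable section

open Set Submodule Module MeasureTheory Relation
open scoped RealInnerProductSpace

variable {d : ℕ}

/-- The lattice Γ generated over ℤ by the basis `B` of ℝ^d. -/
def latticeOf (B : Basis (Fin d) ℝ (EuclideanSpace ℝ (Fin d))) :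
    Submodule ℤ (EuclideanSpace ℝ (Fin d)) :=
  Submodule.span ℤ (Set.range B)

/-- The determinant d(Γ) of the lattice generated by `B`. -/
def latDet (B : Basis (Fin d) ℝ (EuclideanSpace ℝ (Fin d))) : ℝ :=
  |(EuclideanSpace.basisFun (Fin d) ℝ).toBasis.det (fun i => B i)|

/-- The dual lattice Γ† = {θ : θ·g ∈ 2πℤ for all g ∈ Γ}. -/
def dualLattice (B : Basis (Fin d) ℝ (EuclideanSpace ℝ (Fin d))) :
    Set (EuclideanSpace ℝ (Fin d)) :=
  {θ | ∀ g ∈ latticeOf B, ∃ k : ℤ, ⟪θ, g⟫ = 2 * Real.pi * k}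

/-- Θ_r : nonzero dual lattice vectors of norm at most r. -/
def Theta (B : Basis (Fin d) ℝ (EuclideanSpace ℝ (Fin d))) (r : ℝ) :
    Set (EuclideanSpace ℝ (Fin d)) :=
  {θ | θ ∈ dualLattice B ∧ θ ≠ 0 ∧ ‖θ‖ ≤ r}

/-- Θ_r⁰ : dual lattice vectors of norm at most r (including 0). -/
def Theta0 (B : Basis (Fin d) ℝ (EuclideanSpace ℝ (Fin d))) (r : ℝ) :
    Set (EuclideanSpace ℝ (Fin d)) :=
  {θ | θ ∈ dualLattice B ∧ ‖θ‖ ≤ r}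

/-- A lattice r-subspace: a subspace spanned by dual lattice vectors from Θ_r⁰. -/
def IsLatticeSubspace (B : Basis (Fin d) ℝ (EuclideanSpace ℝ (Fin d))) (r : ℝ)
    (V : Submodule ℝ (EuclideanSpace ℝ (Fin d))) : Prop :=
  ∃ S : Set (EuclideanSpace ℝ (Fin d)), S ⊆ Theta0 B r ∧ V = Submodule.span ℝ S

/-- Orthogonal projection ξ_V onto a subspace, viewed in the ambient space. -/
def projV (V : Submodule ℝ (EuclideanSpace ℝ (Fin d))) (ξ : EuclideanSpace ℝ (Fin d)) :
    EuclideanSpace ℝ (Fin d) :=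
  (orthogonalProjection V ξ : EuclideanSpace ℝ (Fin d))

/-- ω_n: the volume of the unit ball in ℝ^n. -/
def unitBallVol (n : ℕ) : ℝ :=
  (MeasureTheory.volume (Metric.ball (0 : EuclideanSpace ℝ (Fin n)) 1)).toReal

/-- The resonant layer Λ(θ) (= ℝ^d when θ = 0). -/
def layer (ρ a : ℝ) (θ : EuclideanSpace ℝ (Fin d)) : Set (EuclideanSpace ℝ (Fin d)) :=
  {ξ | θ = 0 ∨ |⟪ξ, θ⟫| < ρ ^ a * ‖θ‖}

/-- Υ_θ(ξ): the points θ-resonant congruent to ξ. -/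
def upsTheta (ρ a : ℝ) (θ ξ : EuclideanSpace ℝ (Fin d)) : Set (EuclideanSpace ℝ (Fin d)) :=
  {η | ξ ∈ layer ρ a θ ∧ η ∈ layer ρ a θ ∧ ∃ l : ℤ, ξ - η = (l : ℝ) • θ}

/-- One step of resonant congruence (with some θ ∈ Θ_r⁰). -/
def resStep (B : Basis (Fin d) ℝ (EuclideanSpace ℝ (Fin d))) (ρ a r : ℝ)
    (ξ η : EuclideanSpace ℝ (Fin d)) : Prop :=
  ∃ θ ∈ Theta0 B r, η ∈ upsTheta ρ a θ ξ

/-- Υ(ξ): all points resonant congruent to ξ. -/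
def Ups (B : Basis (Fin d) ℝ (EuclideanSpace ℝ (Fin d))) (ρ a r : ℝ)
    (ξ : EuclideanSpace ℝ (Fin d)) : Set (EuclideanSpace ℝ (Fin d)) :=
  {η | Relation.ReflTransGen (resStep B ρ a r) ξ η}

/-- N(ξ) = Υ(ξ) − ξ. -/
def resN (B : Basis (Fin d) ℝ (EuclideanSpace ℝ (Fin d))) (ρ a r : ℝ)
    (ξ : EuclideanSpace ℝ (Fin d)) : Set (EuclideanSpace ℝ (Fin d)) :=
  {m | ξ + m ∈ Ups B ρ a r ξ}

/-- Ξ₁(V) = {ξ : |ξ_V| < ρ^{α_n}}, n = dim V. -/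
def Xi1 (ρ : ℝ) (α : ℕ → ℝ) (V : Submodule ℝ (EuclideanSpace ℝ (Fin d))) :
    Set (EuclideanSpace ℝ (Fin d)) :=
  {ξ | ‖projV V ξ‖ < ρ ^ α (Module.finrank ℝ V)}

/-- Ξ₂(V) = ∪_{ξ ∈ Ξ₁(V)} Υ(ξ). -/
def Xi2 (B : Basis (Fin d) ℝ (EuclideanSpace ℝ (Fin d))) (ρ r : ℝ) (α : ℕ → ℝ)
    (V : Submodule ℝ (EuclideanSpace ℝ (Fin d))) : Set (EuclideanSpace ℝ (Fin d)) :=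
  {η | ∃ ξ ∈ Xi1 ρ α V, η ∈ Ups B ρ (α 1) r ξ}

/-- Ξ(V): Ξ₂(V) minus the Ξ₂(W) for all lattice r-subspaces W of larger dimension. -/
def Xi (B : Basis (Fin d) ℝ (EuclideanSpace ℝ (Fin d))) (ρ r : ℝ) (α : ℕ → ℝ)
    (V : Submodule ℝ (EuclideanSpace ℝ (Fin d))) : Set (EuclideanSpace ℝ (Fin d)) :=
  Xi2 B ρ r α V \
    ⋃ W ∈ {W : Submodule ℝ (EuclideanSpace ℝ (Fin d)) |
        IsLatticeSubspace B r W ∧ Module.finrank ℝ V < Module.finrank ℝ W},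
      Xi2 B ρ r α W

/-- The standing conditions on the parameters ρ ≥ 1, r, κ > 0 and the exponents α_j:
0 = α₀, α_{n+1} > α_n + 2κd², α_d < 1, r ≤ ρ^κ, and r ≥ r₀ (i.e. Θ_r⁰ spans ℝ^d). -/
def GoodParams (B : Basis (Fin d) ℝ (EuclideanSpace ℝ (Fin d))) (ρ r κ : ℝ)
    (α : ℕ → ℝ) : Prop :=
  1 ≤ ρ ∧ 0 < κ ∧ α 0 = 0 ∧ (∀ n < d, α n + 2 * κ * (d : ℝ) ^ 2 < α (n + 1)) ∧
    α d < 1 ∧ r ≤ ρ ^ κ ∧ Submodule.span ℝ (Theta0 B r) = ⊤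


/-- The determinant of the matrix of inner products `⟪x i, B j⟫`, as an alternating map in `x`. -/
def innerDet (B : Basis (Fin d) ℝ (EuclideanSpace ℝ (Fin d))) :
    EuclideanSpace ℝ (Fin d) [⋀^Fin d]→ₗ[ℝ] ℝ :=
  Matrix.detRowAlternating.compLinearMap
    (LinearMap.pi fun j => (innerₗ (EuclideanSpace ℝ (Fin d))).flip (B j))

lemma innerDet_apply (B : Basis (Fin d) ℝ (EuclideanSpace ℝ (Fin d)))
    (x : Fin d → EuclideanSpace ℝ (Fin d)) :
    innerDet B x = (Matrix.of fun i j => ⟪x i, B j⟫).det := rfl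

lemma abs_innerDet_le (B : Basis (Fin d) ℝ (EuclideanSpace ℝ (Fin d)))
    (x : Fin d → EuclideanSpace ℝ (Fin d)) :
    |innerDet B x| ≤ (d.factorial * ∏ j, ‖B j‖) * ∏ i, ‖x i‖ := by
  rw [innerDet_apply, Matrix.det_apply']
  refine (Finset.abs_sum_le_sum_abs _ _).trans ?_
  have hterm : ∀ σ ∈ (Finset.univ : Finset (Equiv.Perm (Fin d))),
      |((Equiv.Perm.sign σ : ℤ) : ℝ) * ∏ i, Matrix.of (fun i j => ⟪x i, B j⟫) (σ i) i|
        ≤ (∏ j, ‖B j‖) * ∏ i, ‖x i‖ := by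
    intro σ _
    have hsign : |((Equiv.Perm.sign σ : ℤ) : ℝ)| = 1 := by
      rw [← Int.cast_abs, Int.abs_eq_natAbs, Int.units_natAbs]; simp
    rw [abs_mul, hsign, one_mul, Finset.abs_prod, ← Equiv.prod_comp σ fun i => ‖x i‖, mul_comm,
      ← Finset.prod_mul_distrib]
    exact Finset.prod_le_prod (fun _ _ => abs_nonneg _) fun i _ =>
      abs_real_inner_le_norm (x (σ i)) (B i)
  refine (Finset.sum_le_card_nsmul _ _ _ hterm).trans (le_of_eq ?_)
  rw [Finset.card_univ, Fintype.card_perm, Fintype.card_fin, nsmul_eq_mul, mul_assoc]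

lemma innerDet_ne_zero (B : Basis (Fin d) ℝ (EuclideanSpace ℝ (Fin d)))
    {x : Fin d → EuclideanSpace ℝ (Fin d)} (hx : LinearIndependent ℝ x) :
    innerDet B x ≠ 0 := by
  rw [innerDet_apply, ← isUnit_iff_ne_zero, ← Matrix.isUnit_iff_isUnit_det,
    ← Matrix.linearIndependent_rows_iff_isUnit]
  refine hx.map' (LinearMap.pi fun j => (innerₗ (EuclideanSpace ℝ (Fin d))).flip (B j)) ?_
  refine LinearMap.ker_eq_bot'.2 fun y hy => ?_
  refine InnerProductSpace.ext_inner_right_basis B fun j => ?_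
  simpa [real_inner_comm] using congrFun hy j

lemma two_pi_pow_le_abs_innerDet (B : Basis (Fin d) ℝ (EuclideanSpace ℝ (Fin d)))
    {x : Fin d → EuclideanSpace ℝ (Fin d)} (hx : LinearIndependent ℝ x)
    (hxB : ∀ i, x i ∈ dualLattice B) :
    (2 * Real.pi) ^ d ≤ |innerDet B x| := by
  have hne := innerDet_ne_zero B hx
  choose k hk using fun i j => hxB i (B j) (Submodule.subset_span (Set.mem_range_self j))
  have hdet : innerDet B x = (2 * Real.pi) ^ d * ((Matrix.of k).det : ℤ) := by
    have hM : (Matrix.of fun i j => ⟪x i, B j⟫) =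
        (2 * Real.pi) • (Matrix.of k).map (Int.cast : ℤ → ℝ) := by
      ext i j; simp [hk]
    rw [innerDet_apply, hM, Matrix.det_smul, Fintype.card_fin, Int.cast_det]
  rw [hdet] at hne ⊢
  have hk0 : (Matrix.of k).det ≠ 0 := fun h => hne (by rw [h]; simp)
  have hone : (1 : ℝ) ≤ |(((Matrix.of k).det : ℤ) : ℝ)| := by
    exact_mod_cast Int.one_le_abs hk0
  rw [abs_mul, abs_of_pos (by positivity)]
  exact le_mul_of_one_le_right (by positivity) hone

/-- A spanning set `T` of `ℝ^d` contains a basis that includes a prescribed vector `θ ∈ T` and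
whose remaining vectors contain a basis of a prescribed subspace spanned by elements of `T`. -/
lemma exists_linearIndependent_adapted {T S : Set (EuclideanSpace ℝ (Fin d))}
    (hT : Submodule.span ℝ T = ⊤) (hST : S ⊆ T) {θ : EuclideanSpace ℝ (Fin d)} (hθT : θ ∈ T)
    (hθ : θ ∉ Submodule.span ℝ S) :
    ∃ (x : Fin d → EuclideanSpace ℝ (Fin d)) (i₀ : Fin d), LinearIndependent ℝ x ∧
      (∀ i, x i ∈ T) ∧ x i₀ = θ ∧ Submodule.span ℝ S ≤ Submodule.span ℝ (x '' {i₀}ᶜ) := by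
  obtain ⟨b, hbS, hspan, hb⟩ := exists_linearIndependent ℝ S
  have hθb : θ ∉ Submodule.span ℝ b := hspan ▸ hθ
  have hins : LinearIndepOn ℝ id (insert θ b) := LinearIndepOn.id_insert hb hθb
  obtain ⟨c, hcT, hbc, hTc, hc⟩ := exists_linearIndepOn_id_extension hins
    (Set.insert_subset hθT (hbS.trans hST))
  have hc_top : ⊤ ≤ Submodule.span ℝ (Set.range ((↑) : c → EuclideanSpace ℝ (Fin d))) := by
    rw [Subtype.range_coe, ← hT]
    exact Submodule.span_le.2 hTc
  let bas : Basis c ℝ (EuclideanSpace ℝ (Fin d)) := Basis.mk hc hc_top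
  let e : Fin d ≃ c := (EuclideanSpace.basisFun (Fin d) ℝ).toBasis.indexEquiv bas
  refine ⟨fun i => e i, e.symm ⟨θ, hbc (Set.mem_insert _ _)⟩, hc.comp _ e.injective,
    fun i => hcT (e i).2, by simp, ?_⟩
  rw [← hspan]
  refine Submodule.span_mono fun y hy => ⟨e.symm ⟨y, hbc (Set.mem_insert_of_mem _ hy)⟩, ?_, by simp⟩
  intro h
  have hyθ : y = θ := by simpa using h
  exact hθb (hyθ ▸ Submodule.subset_span hy)

/-- An alternating map is unchanged when a vector in the span of the other arguments is subtracted
from one argument. -/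
lemma AlternatingMap.map_update_sub_of_mem_span {ι R M N : Type*} [CommRing R] [AddCommGroup M]
    [Module R M] [AddCommGroup N] [Module R N] [DecidableEq ι] (f : M [⋀^ι]→ₗ[R] N) (x : ι → M)
    (i : ι) {v : M} (hv : v ∈ Submodule.span R (x '' {i}ᶜ)) :
    f (Function.update x i (x i - v)) = f x := by
  have hzero : Submodule.span R (x '' {i}ᶜ) ≤
      LinearMap.ker (f.toMultilinearMap.toLinearMap x i) := by
    refine Submodule.span_le.2 ?_
    rintro _ ⟨j, hj, rfl⟩
    exact f.map_update_self x (Ne.symm hj)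
  have hv0 : f (Function.update x i v) = 0 := hzero hv
  rw [f.map_update_sub, hv0, sub_zero, Function.update_eq_self]

lemma two_pi_pow_le_mul_norm_sub (B : Basis (Fin d) ℝ (EuclideanSpace ℝ (Fin d))) {r : ℝ}
    (hr : Submodule.span ℝ (Theta0 B r) = ⊤) {V : Submodule ℝ (EuclideanSpace ℝ (Fin d))}
    (hV : IsLatticeSubspace B r V) {θ : EuclideanSpace ℝ (Fin d)} (hθ : θ ∈ Theta0 B r)
    (hθV : θ ∉ V) {v : EuclideanSpace ℝ (Fin d)} (hv : v ∈ V) :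
    (2 * Real.pi) ^ d ≤ (d.factorial * ∏ j, ‖B j‖) * (r ^ (d - 1) * ‖θ - v‖) := by
  obtain ⟨S, hS, rfl⟩ := hV
  obtain ⟨x, i₀, hx, hxT, rfl, hspan⟩ := exists_linearIndependent_adapted hr hS hθ hθV
  calc (2 * Real.pi) ^ d ≤ |innerDet B x| := two_pi_pow_le_abs_innerDet B hx fun i => (hxT i).1
    _ = |innerDet B (Function.update x i₀ (x i₀ - v))| := by
        rw [(innerDet B).map_update_sub_of_mem_span x i₀ (hspan hv)]
    _ ≤ _ := abs_innerDet_le B _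
    _ ≤ _ := by
        refine mul_le_mul_of_nonneg_left ?_ (by positivity)
        rw [← Finset.prod_erase_mul _ _ (Finset.mem_univ i₀), Function.update_self]
        refine mul_le_mul_of_nonneg_right ?_ (norm_nonneg _)
        have hcard : (Finset.univ.erase i₀).card = d - 1 := by simp
        rw [← hcard]
        rw [← Finset.prod_const]
        refine Finset.prod_le_prod (fun _ _ => norm_nonneg _) fun i hi => ?_
        rw [Function.update_of_ne (Finset.ne_of_mem_erase hi)]
        exact (hxT i).2

/-- If `ξ ∈ V + ℝθ`, then `ξ` is controlled by its projections onto `V` and `ℝθ`, with a constant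
governed by the sine `‖θ - θ_V‖ / ‖θ‖` of the angle between `θ` and `V`. -/
lemma norm_sub_projV_mul_norm_le (V : Submodule ℝ (EuclideanSpace ℝ (Fin d)))
    {θ ξ : EuclideanSpace ℝ (Fin d)} (hξ : ξ ∈ V ⊔ Submodule.span ℝ {θ}) :
    ‖θ - projV V θ‖ * ‖ξ‖ ≤
      2 * ‖θ‖ * (‖projV (Submodule.span ℝ {θ}) ξ‖ + ‖projV V ξ‖) := by
  obtain ⟨v, hv, w, hw, rfl⟩ := Submodule.mem_sup.1 hξ
  obtain ⟨t, rfl⟩ := Submodule.mem_span_singleton.1 hw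
  set ξ := v + t • θ with hξdef
  set e := θ - projV V θ with he
  have heV : e ∈ Vᗮ := V.sub_starProjection_mem_orthogonal θ
  have hpV : projV V v = v := V.starProjection_eq_self_iff.2 hv
  have hadd : ∀ y z, projV V (y + z) = projV V y + projV V z := fun y z =>
    map_add V.starProjection y z
  have hsmul : ∀ (a : ℝ) y, projV V (a • y) = a • projV V y := fun a y =>
    map_smul V.starProjection a y
  have hdecomp : ξ = projV V ξ + t • e := by
    rw [hξdef, hadd, hsmul, hpV, he]; module
  have hproj_mem : ∀ y, projV V y ∈ V := fun y => V.starProjection_apply_mem y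
  have hinner_e : ⟪e, θ⟫ = ‖e‖ ^ 2 := by
    have h0 : ⟪e, projV V θ⟫ = 0 := Submodule.inner_left_of_mem_orthogonal (hproj_mem θ) heV
    rw [← real_inner_self_eq_norm_sq]
    conv_rhs => rw [he, inner_sub_right, ← he, h0, sub_zero]
  have hle : ‖e‖ ≤ ‖θ‖ := by
    have h := real_inner_le_norm e θ
    rw [hinner_e] at h
    nlinarith [norm_nonneg e, norm_nonneg θ]
  have hinner : ⟪ξ, θ⟫ = ⟪projV V ξ, θ⟫ + t * ‖e‖ ^ 2 := by
    conv_lhs => rw [hdecomp, inner_add_left, real_inner_smul_left, hinner_e]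
  have hprojθ : ⟪ξ, θ⟫ = ⟪projV (Submodule.span ℝ {θ}) ξ, θ⟫ := by
    have h0 : ⟪ξ - projV (Submodule.span ℝ {θ}) ξ, θ⟫ = 0 :=
      Submodule.inner_left_of_mem_orthogonal (Submodule.mem_span_singleton_self θ)
        ((Submodule.span ℝ {θ}).sub_starProjection_mem_orthogonal ξ)
    rw [inner_sub_left] at h0
    linarith
  have h1 := abs_real_inner_le_norm (projV (Submodule.span ℝ {θ}) ξ) θ
  have h2 := abs_real_inner_le_norm (projV V ξ) θ
  have h3 : |t| * ‖e‖ ^ 2 ≤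
      ‖θ‖ * (‖projV (Submodule.span ℝ {θ}) ξ‖ + ‖projV V ξ‖) := by
    have h4 : t * ‖e‖ ^ 2 = ⟪projV (Submodule.span ℝ {θ}) ξ, θ⟫ - ⟪projV V ξ, θ⟫ := by
      linarith
    have h5 := abs_sub ⟪projV (Submodule.span ℝ {θ}) ξ, θ⟫ ⟪projV V ξ, θ⟫
    rw [← h4, abs_mul, abs_of_nonneg (sq_nonneg ‖e‖)] at h5
    linarith
  have h6 : ‖ξ‖ ≤ ‖projV V ξ‖ + |t| * ‖e‖ := by
    conv_lhs => rw [hdecomp]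
    exact (norm_add_le _ _).trans_eq (by rw [norm_smul, Real.norm_eq_abs])
  have h7 := mul_le_mul_of_nonneg_left h6 (norm_nonneg e)
  have h8 := mul_le_mul_of_nonneg_right hle (norm_nonneg (projV V ξ))
  have h9 := mul_nonneg (norm_nonneg θ) (norm_nonneg (projV (Submodule.span ℝ {θ}) ξ))
  linarith

/-- Lemma 4.2(1): there is C = C(d,Γ) > 0 such that for every lattice
r-subspace V of dimension m ≤ d−1, every θ ∈ Θ_r with θ ∉ V, and every ξ ∈ V + ℝθ,
|ξ| ≤ C r^d (|ξ_θ| + |ξ_V|). -/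
theorem norm_le_of_mem_sup_span
    (d : ℕ) (hd : 2 ≤ d) (B : Basis (Fin d) ℝ (EuclideanSpace ℝ (Fin d))) :
    ∃ C : ℝ, 0 < C ∧ ∀ r : ℝ, Submodule.span ℝ (Theta0 B r) = ⊤ →
      ∀ m : ℕ, m ≤ d - 1 →
      ∀ V : Submodule ℝ (EuclideanSpace ℝ (Fin d)), IsLatticeSubspace B r V →
        Module.finrank ℝ V = m →
      ∀ θ ∈ Theta B r, θ ∉ V →
      ∀ ξ ∈ V ⊔ Submodule.span ℝ {θ},
        ‖ξ‖ ≤ C * r ^ d * (‖projV (Submodule.span ℝ {θ}) ξ‖ + ‖projV V ξ‖) := by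
  have hB : 0 < ∏ j, ‖B j‖ := Finset.prod_pos fun j _ => norm_pos_iff.2 (B.ne_zero j)
  have hK : 0 < d.factorial * ∏ j, ‖B j‖ := mul_pos (by positivity) hB
  have hP : 0 < (2 * Real.pi) ^ d := by positivity
  refine ⟨2 * (d.factorial * ∏ j, ‖B j‖) / (2 * Real.pi) ^ d, by positivity, ?_⟩
  rintro r hr m - V hV - θ ⟨hθB, hθ0, hθr⟩ hθV ξ hξ
  have hmem : projV V θ ∈ V := V.starProjection_apply_mem θ
  have hlow := two_pi_pow_le_mul_norm_sub B hr hV ⟨hθB, hθr⟩ hθV hmem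
  have hgeo := norm_sub_projV_mul_norm_le V hξ
  have hr0 : 0 ≤ r := (norm_nonneg θ).trans hθr
  have hrd : r ^ d = r ^ (d - 1) * r := by rw [← pow_succ]; congr 1; omega
  set K := d.factorial * ∏ j, ‖B j‖
  set s := ‖projV (Submodule.span ℝ {θ}) ξ‖ + ‖projV V ξ‖
  have hs0 : 0 ≤ s := by positivity
  rw [div_mul_eq_mul_div, div_mul_eq_mul_div, le_div_iff₀ hP]
  calc ‖ξ‖ * (2 * Real.pi) ^ d ≤ ‖ξ‖ * (K * (r ^ (d - 1) * ‖θ - projV V θ‖)) := by gcongr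
    _ = K * r ^ (d - 1) * (‖θ - projV V θ‖ * ‖ξ‖) := by ring
    _ ≤ K * r ^ (d - 1) * (2 * ‖θ‖ * s) := by gcongr
    _ ≤ K * r ^ (d - 1) * (2 * r * s) := by gcongr
    _ = 2 * K * r ^ d * s := by rw [hrd]; ring
end
end

section
/- There is a constant C > 0, depending only on d and Γ, such that for every ξ ∈ ℝ^d: (i) every η ∈ Υ(ξ) satisfies |ξ − η| ≤ C ρ^{α₁} r^{(d−1)d}; (ii) every m ∈ N(ξ) satisfies |m| ≤ C ρ^{α₁} r^{d(d−1)}; and (iii) the cardinality of N(ξ) is at most C ρ^{dα₁} r^{d²(d−1)}. -/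
noncomputable section

open Set Submodule Module MeasureTheory Relation
open scoped RealInnerProductSpace

variable {d : ℕ}

/-- A step of resonant congruence along some `θ ∈ Θ_r⁰` lying in the subspace `W`. -/
def resStepIn (B : Basis (Fin d) ℝ (EuclideanSpace ℝ (Fin d))) (ρ a r : ℝ)
    (W : Submodule ℝ (EuclideanSpace ℝ (Fin d))) (ξ η : EuclideanSpace ℝ (Fin d)) : Prop :=
  ∃ θ ∈ Theta0 B r, θ ∈ W ∧ η ∈ upsTheta ρ a θ ξ

/-- The vectors `θ ∈ Θ_r⁰ ∩ W` whose layer meets the set of points reachable from `η` by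
resonant steps inside `W`. -/
def activeVectors (B : Basis (Fin d) ℝ (EuclideanSpace ℝ (Fin d))) (ρ a r : ℝ)
    (W : Submodule ℝ (EuclideanSpace ℝ (Fin d))) (η : EuclideanSpace ℝ (Fin d)) :
    Set (EuclideanSpace ℝ (Fin d)) :=
  {θ | θ ∈ Theta0 B r ∧ θ ∈ W ∧ ∃ x, ReflTransGen (resStepIn B ρ a r W) η x ∧ x ∈ layer ρ a θ}

/-- The vectors active at `η` inside `W` span `W`. -/
def IsFilled (B : Basis (Fin d) ℝ (EuclideanSpace ℝ (Fin d))) (ρ a r : ℝ)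
    (W : Submodule ℝ (EuclideanSpace ℝ (Fin d))) (η : EuclideanSpace ℝ (Fin d)) : Prop :=
  Submodule.span ℝ (activeVectors B ρ a r W η) = W

section Congruence

variable {B : Basis (Fin d) ℝ (EuclideanSpace ℝ (Fin d))} {ρ a r : ℝ}
  {U V W : Submodule ℝ (EuclideanSpace ℝ (Fin d))} {ξ η x y θ : EuclideanSpace ℝ (Fin d)}

lemma resStepIn.symm (h : resStepIn B ρ a r W ξ η) : resStepIn B ρ a r W η ξ := by
  obtain ⟨θ, hθ, hW, h₁, h₂, l, hl⟩ := h
  refine ⟨θ, hθ, hW, h₂, h₁, -l, ?_⟩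
  rw [← neg_sub, hl]
  simp

lemma reflTransGen_resStepIn_symm (h : ReflTransGen (resStepIn B ρ a r W) ξ η) :
    ReflTransGen (resStepIn B ρ a r W) η ξ :=
  have : Std.Symm (resStepIn B ρ a r W) := ⟨fun _ _ h => h.symm⟩
  symm_of (ReflTransGen (resStepIn B ρ a r W)) h

lemma reflTransGen_resStepIn_mono (hVW : V ≤ W) (h : ReflTransGen (resStepIn B ρ a r V) ξ η) :
    ReflTransGen (resStepIn B ρ a r W) ξ η :=
  ReflTransGen.mono (fun _ _ ⟨θ, hθ, hV, h⟩ => ⟨θ, hθ, hVW hV, h⟩) _ _ h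

lemma sub_mem_of_reflTransGen (h : ReflTransGen (resStepIn B ρ a r W) ξ η) : ξ - η ∈ W := by
  induction h with
  | refl => simp
  | tail _ h ih =>
    obtain ⟨θ, -, hW, -, -, l, hl⟩ := h
    rw [← sub_add_sub_cancel]
    exact W.add_mem ih (hl ▸ W.smul_mem _ hW)

lemma activeVectors_subset : activeVectors B ρ a r W η ⊆ W := fun _ h => h.2.1

lemma IsFilled.of_reflTransGen (hη : IsFilled B ρ a r W η)
    (h : ReflTransGen (resStepIn B ρ a r W) η x) : IsFilled B ρ a r W x := by
  refine le_antisymm (span_le.2 activeVectors_subset) (hη.ge.trans (span_mono ?_))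
  rintro θ ⟨hθ, hW, y, hy, hyθ⟩
  exact ⟨hθ, hW, y, (reflTransGen_resStepIn_symm h).trans hy, hyθ⟩

lemma isFilled_bot : IsFilled B ρ a r ⊥ η :=
  le_antisymm (span_le.2 activeVectors_subset) bot_le

lemma IsFilled.sup_span_singleton (hη : IsFilled B ρ a r W η)
    (h : ReflTransGen (resStepIn B ρ a r W) η x) (hθ : θ ∈ Theta0 B r) (hx : x ∈ layer ρ a θ) :
    IsFilled B ρ a r (W ⊔ span ℝ {θ}) η := by
  refine le_antisymm (span_le.2 activeVectors_subset) (sup_le (hη.ge.trans (span_mono ?_)) ?_)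
  · rintro φ ⟨hφ, hW, y, hy, hyφ⟩
    exact ⟨hφ, le_sup_left (a := W) hW, y, reflTransGen_resStepIn_mono le_sup_left hy, hyφ⟩
  · rw [span_singleton_le_iff_mem]
    exact subset_span ⟨hθ, le_sup_right (a := W) (mem_span_singleton_self θ), x,
      reflTransGen_resStepIn_mono le_sup_left h, hx⟩

/-- If no layer of a vector in `U \ W` meets the `W`-component of `η`, then the `U`-component
of `η` is its `W`-component. -/
lemma reflTransGen_resStepIn_of_closed
    (hW : ∀ x, ReflTransGen (resStepIn B ρ a r W) η x →
      ∀ θ ∈ Theta0 B r, θ ∈ U → x ∈ layer ρ a θ → θ ∈ W)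
    (h : ReflTransGen (resStepIn B ρ a r U) η x) : ReflTransGen (resStepIn B ρ a r W) η x := by
  induction h with
  | refl => rfl
  | tail _ h ih =>
    obtain ⟨θ, hθ, hU, h⟩ := h
    exact ih.tail ⟨θ, hθ, hW _ ih θ hθ hU h.1, h⟩

/-- A nonzero filled subspace is obtained from a smaller filled subspace by adding one vector
whose layer meets the component. -/
lemma IsFilled.exists_lt (hη : IsFilled B ρ a r W η) (hW : W ≠ ⊥) :
    ∃ V < W, IsFilled B ρ a r V η ∧ ∃ x, ReflTransGen (resStepIn B ρ a r V) η x ∧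
      ∃ θ ∈ Theta0 B r, θ ∉ V ∧ x ∈ layer ρ a θ ∧ W = V ⊔ span ℝ {θ} := by
  obtain ⟨V, ⟨hV, hVW⟩, hmax⟩ := wellFounded_gt.has_min
    {V | IsFilled B ρ a r V η ∧ V < W} ⟨⊥, isFilled_bot, bot_lt_iff_ne_bot.2 hW⟩
  have hex : ∃ x, ReflTransGen (resStepIn B ρ a r V) η x ∧
      ∃ θ ∈ Theta0 B r, θ ∈ W ∧ x ∈ layer ρ a θ ∧ θ ∉ V := by
    by_contra! hcl
    refine hVW.not_ge (hη.ge.trans (span_le.2 ?_))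
    rintro θ ⟨hθ, hθW, x, hx, hxθ⟩
    exact hcl x (reflTransGen_resStepIn_of_closed hcl hx) θ hθ hθW hxθ
  obtain ⟨x, hx, θ, hθ, hθW, hxθ, hθV⟩ := hex
  refine ⟨V, hVW, hV, x, hx, θ, hθ, hθV, hxθ, ?_⟩
  have hle : V ⊔ span ℝ {θ} ≤ W := sup_le hVW.le ((span_singleton_le_iff_mem _ _).2 hθW)
  by_contra hne
  refine hmax _ ⟨hV.sup_span_singleton hx hθ hxθ, hle.lt_of_ne (Ne.symm hne)⟩ ?_
  exact left_lt_sup.2 fun h => hθV ((span_singleton_le_iff_mem _ _).1 h)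

/-- Every resonant congruence class is a component inside some filled subspace. -/
lemma exists_isFilled_ups_subset (B : Basis (Fin d) ℝ (EuclideanSpace ℝ (Fin d))) (ρ a r : ℝ)
    (η : EuclideanSpace ℝ (Fin d)) :
    ∃ V, IsFilled B ρ a r V η ∧
      ∀ x ∈ Ups B ρ a r η, ReflTransGen (resStepIn B ρ a r V) η x := by
  obtain ⟨V, hV, hmax⟩ := wellFounded_gt.has_min {V | IsFilled B ρ a r V η} ⟨⊥, isFilled_bot⟩
  refine ⟨V, hV, fun x hx => reflTransGen_resStepIn_of_closed (U := ⊤) ?_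
    (ReflTransGen.mono (fun _ _ ⟨θ, hθ, h⟩ => ⟨θ, hθ, mem_top, h⟩) _ _ hx)⟩
  intro y hy θ hθ _ hyθ
  by_contra hθV
  exact hmax _ (hV.sup_span_singleton hy hθ hyθ)
    (left_lt_sup.2 fun h => hθV ((span_singleton_le_iff_mem _ _).1 h))

lemma abs_inner_le_of_mem_layer (h : x ∈ layer ρ a θ) : |⟪x, θ⟫| ≤ ρ ^ a * ‖θ‖ := by
  rcases h with rfl | h
  · simp
  · exact h.le

/-- Two points that differ by a vector of `W` and have small components along `W` are close. -/
lemma norm_sub_le_of_abs_inner_le {E : ℝ} (hE : 0 ≤ E) (hxy : x - y ∈ W) (hx : ∀ w ∈ W, |⟪x, w⟫| ≤ E * ‖w‖)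
    (hy : ∀ w ∈ W, |⟪y, w⟫| ≤ E * ‖w‖) : ‖x - y‖ ≤ 2 * E := by
  rcases eq_or_ne (x - y) 0 with h0 | h0
  · rw [h0, norm_zero]
    positivity
  · have hpos : 0 < ‖x - y‖ := norm_pos_iff.2 h0
    have hx' := (abs_le.1 (hx _ hxy)).2
    have hy' := (abs_le.1 (hy _ hxy)).1
    have hsq : ⟪x, x - y⟫ - ⟪y, x - y⟫ = ‖x - y‖ * ‖x - y‖ := by
      rw [← inner_sub_left, real_inner_self_eq_norm_mul_norm]
    refine le_of_mul_le_mul_right ?_ hpos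
    linarith

/-- Bound for the component of `η` along a filled subspace, given functionals that separate the
vectors of `Θ_r⁰` from the subspaces spanned by other such vectors. -/
lemma IsFilled.abs_inner_le {A : ℝ} (hρ : 0 < ρ) (hr : 0 ≤ r) (hA : 1 ≤ A)
    (hsep : ∀ S ⊆ Theta0 B r, ∀ θ ∈ Theta0 B r, θ ∉ span ℝ S →
      ∃ f : EuclideanSpace ℝ (Fin d) →ₗ[ℝ] ℝ, (∀ w ∈ span ℝ S, f w = 0) ∧ 1 ≤ |f θ| ∧
        ∀ x, r * |f x| ≤ A * ‖x‖)
    (hη : IsFilled B ρ a r W η) :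
    ∀ w ∈ W, |⟪η, w⟫| ≤ ρ ^ a * (5 * A) ^ (finrank ℝ W - 1) * ‖w‖ := by
  induction hn : finrank ℝ W using Nat.strong_induction_on generalizing W η with
  | _ n ih =>
  subst hn
  have hL : 0 < ρ ^ a := Real.rpow_pos_of_pos hρ a
  rcases eq_or_ne W ⊥ with rfl | hW
  · intro w hw
    simp [(mem_bot ℝ).1 hw]
  obtain ⟨V, hVW, hV, x, hx, θ, hθ, hθV, hxθ, rfl⟩ := hη.exists_lt hW
  have hrank := Submodule.finrank_lt_finrank_of_lt hVW
  have hxθ' := abs_inner_le_of_mem_layer hxθ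
  have hA1 : 1 ≤ 5 * A := by linarith
  intro v hv
  obtain ⟨w, hw, u, hu, rfl⟩ := mem_sup.1 hv
  obtain ⟨t, rfl⟩ := mem_span_singleton.1 hu
  rcases eq_or_ne V ⊥ with rfl | hV0
  · have hηx : η = x := sub_eq_zero.1 ((mem_bot ℝ).1 (sub_mem_of_reflTransGen hx))
    rw [(mem_bot ℝ).1 hw, zero_add, hηx, inner_smul_right, abs_mul, norm_smul, Real.norm_eq_abs]
    have hE : ρ ^ a ≤ ρ ^ a * (5 * A) ^ (finrank ℝ ↥(⊥ ⊔ span ℝ {θ}) - 1) :=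
      le_mul_of_one_le_right hL.le (one_le_pow₀ hA1)
    calc |t| * |⟪x, θ⟫| ≤ |t| * (ρ ^ a * ‖θ‖) := by gcongr
      _ = ρ ^ a * (|t| * ‖θ‖) := by ring
      _ ≤ _ := by gcongr
  · have hVpos : 0 < finrank ℝ V := finrank_pos_iff.2 (nontrivial_iff_ne_bot.2 hV0)
    set E : ℝ := ρ ^ a * (5 * A) ^ (finrank ℝ V - 1) with hE
    have hLE : ρ ^ a ≤ E := le_mul_of_one_le_right hL.le (one_le_pow₀ hA1)
    have hE0 : 0 < E := hL.trans_le hLE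
    have hηE := ih _ hrank hV rfl
    have hxE := ih _ hrank (hV.of_reflTransGen hx) rfl
    have hdist : ‖η - x‖ ≤ 2 * E :=
      norm_sub_le_of_abs_inner_le hE0.le (sub_mem_of_reflTransGen hx) hηE hxE
    obtain ⟨f, hf0, hf1, hfA⟩ := hsep (activeVectors B ρ a r V η) (fun _ h => h.1) θ hθ
      (by rwa [show span ℝ (activeVectors B ρ a r V η) = V from hV])
    rw [show span ℝ (activeVectors B ρ a r V η) = V from hV] at hf0
    have ht : r * |t| ≤ A * ‖w + t • θ‖ := by
      refine le_trans ?_ (hfA _)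
      rw [map_add, hf0 w hw, zero_add, map_smul, smul_eq_mul, abs_mul]
      exact mul_le_mul_of_nonneg_left (le_mul_of_one_le_right (abs_nonneg _) hf1) hr
    have htθ : |t| * ‖θ‖ ≤ A * ‖w + t • θ‖ := by
      refine le_trans ?_ ht
      rw [mul_comm]
      gcongr
      exact hθ.2
    have hwn : ‖w‖ ≤ ‖w + t • θ‖ + |t| * ‖θ‖ := by
      have := norm_sub_le (w + t • θ) (t • θ)
      rwa [add_sub_cancel_right, norm_smul, Real.norm_eq_abs] at this
    have hxv : |⟪x, w + t • θ⟫| ≤ E * ‖w‖ + |t| * (ρ ^ a * ‖θ‖) := by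
      rw [inner_add_right, inner_smul_right]
      refine (abs_add_le _ _).trans (add_le_add (hxE w hw) ?_)
      rw [abs_mul]
      gcongr
    have hηv : |⟪η, w + t • θ⟫| ≤ |⟪x, w + t • θ⟫| + 2 * E * ‖w + t • θ‖ := by
      have hsplit : ⟪η, w + t • θ⟫ = ⟪x, w + t • θ⟫ + ⟪η - x, w + t • θ⟫ := by
        rw [← inner_add_left, add_sub_cancel]
      rw [hsplit]
      refine (abs_add_le _ _).trans (add_le_add_right ((abs_real_inner_le_norm _ _).trans ?_) _)
      gcongr
    have hstep : E * (5 * A) ≤ ρ ^ a * (5 * A) ^ (finrank ℝ ↥(V ⊔ span ℝ {θ}) - 1) := by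
      rw [hE, mul_assoc, ← pow_succ]
      gcongr
      omega
    refine le_trans ?_ (mul_le_mul_of_nonneg_right hstep (norm_nonneg _))
    have hb1 : E * ‖w‖ ≤ E * ‖w + t • θ‖ + E * (A * ‖w + t • θ‖) := by
      rw [← mul_add]
      gcongr
      linarith
    have hb2 : |t| * (ρ ^ a * ‖θ‖) ≤ E * (A * ‖w + t • θ‖) := by
      calc |t| * (ρ ^ a * ‖θ‖) = ρ ^ a * (|t| * ‖θ‖) := by ring
        _ ≤ E * (A * ‖w + t • θ‖) := by gcongr
    have hb3 : E * ‖w + t • θ‖ ≤ E * (A * ‖w + t • θ‖) := by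
      gcongr
      exact le_mul_of_one_le_left (norm_nonneg _) hA
    linarith

end Congruence

section DualCoordinates

variable (B : Basis (Fin d) ℝ (EuclideanSpace ℝ (Fin d)))

/-- The coordinates `x ↦ (x·Bᵢ / 2π)ᵢ`, which map the dual lattice to `ℤ^d`. -/
def dualCoord : EuclideanSpace ℝ (Fin d) →ₗ[ℝ] (Fin d → ℝ) :=
  LinearMap.pi fun i => (2 * Real.pi)⁻¹ • (innerₗ (EuclideanSpace ℝ (Fin d)) (B i))

lemma dualCoord_apply (x : EuclideanSpace ℝ (Fin d)) (i : Fin d) :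
    dualCoord B x i = (2 * Real.pi)⁻¹ * ⟪B i, x⟫ := rfl

lemma dualCoord_injective : Function.Injective (dualCoord B) := by
  rw [← LinearMap.ker_eq_bot, LinearMap.ker_eq_bot']
  intro x hx
  refine InnerProductSpace.ext_inner_left_basis (𝕜 := ℝ) B fun i => ?_
  have h := congrFun hx i
  rw [dualCoord_apply] at h
  simpa [Real.pi_ne_zero] using h

lemma exists_int_dualCoord_eq {θ : EuclideanSpace ℝ (Fin d)} (hθ : θ ∈ dualLattice B) (i : Fin d) :
    ∃ k : ℤ, dualCoord B θ i = k := by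
  obtain ⟨k, hk⟩ := hθ (B i) (subset_span (mem_range_self i))
  refine ⟨k, ?_⟩
  rw [dualCoord_apply, real_inner_comm, hk]
  field_simp

lemma exists_abs_dualCoord_le :
    ∃ M : ℝ, 1 ≤ M ∧ ∀ x i, |dualCoord B x i| ≤ M * ‖x‖ := by
  refine ⟨max 1 ‖(dualCoord B).toContinuousLinearMap‖, le_max_left _ _, fun x i => ?_⟩
  calc |dualCoord B x i| ≤ ‖dualCoord B x‖ := norm_le_pi_norm (dualCoord B x) i
    _ ≤ ‖(dualCoord B).toContinuousLinearMap‖ * ‖x‖ :=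
      (dualCoord B).toContinuousLinearMap.le_opNorm x
    _ ≤ _ := by gcongr; exact le_max_right _ _

variable {B}

lemma one_le_mul_of_span_theta0_eq_top (hd : 0 < d) {M r : ℝ} (hM : 0 ≤ M)
    (hMB : ∀ x i, |dualCoord B x i| ≤ M * ‖x‖) (hspan : span ℝ (Theta0 B r) = ⊤) :
    1 ≤ M * r := by
  obtain ⟨θ, hθ, hθ0⟩ : ∃ θ ∈ Theta0 B r, θ ≠ 0 := by
    by_contra! h
    have : Nontrivial (EuclideanSpace ℝ (Fin d)) := by
      have : Nonempty (Fin d) := ⟨⟨0, hd⟩⟩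
      infer_instance
    exact bot_ne_top ((span_eq_bot.2 h).symm.trans hspan)
  obtain ⟨i, hi⟩ : ∃ i, dualCoord B θ i ≠ 0 := by
    by_contra! h
    exact hθ0 (dualCoord_injective B ((funext h).trans (map_zero _).symm))
  obtain ⟨k, hk⟩ := exists_int_dualCoord_eq B hθ.1 i
  have hk0 : k ≠ 0 := by
    rintro rfl
    exact hi (by simpa using hk)
  calc (1 : ℝ) ≤ |(k : ℝ)| := by exact_mod_cast Int.one_le_abs hk0
    _ = |dualCoord B θ i| := by rw [hk]
    _ ≤ M * ‖θ‖ := hMB θ i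
    _ ≤ M * r := by gcongr; exact hθ.2

/-- A spanning set of vectors contains a basis that extends a basis of the span of a given subset
and a given vector outside that span. -/
lemma exists_basis_of_notMem_span {T S : Set (EuclideanSpace ℝ (Fin d))} (hST : S ⊆ T)
    (hT : span ℝ T = ⊤) {θ : EuclideanSpace ℝ (Fin d)} (hθ : θ ∈ T) (hθS : θ ∉ span ℝ S) :
    ∃ (b : Basis (Fin d) ℝ (EuclideanSpace ℝ (Fin d))) (i : Fin d), (∀ j, b j ∈ T) ∧ b i = θ ∧
      span ℝ S ≤ span ℝ (b '' {j | j ≠ i}) := by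
  obtain ⟨s, hsS, hspan, hs⟩ := exists_linearIndependent ℝ S
  have hins : LinearIndepOn ℝ id (insert θ s) := by
    refine LinearIndepOn.id_insert hs ?_
    rwa [hspan]
  have hsub : insert θ s ⊆ T := insert_subset hθ (hsS.trans hST)
  let b₀ := Basis.extendLe hins hsub hT.ge
  have hb₀ : ∀ j, b₀ j = j := fun j => by simp [b₀]
  have hcard : finrank ℝ (EuclideanSpace ℝ (Fin d)) = d := by simp
  have hfin := FiniteDimensional.fintypeBasisIndex b₀
  let e := Fintype.equivFinOfCardEq ((finrank_eq_card_basis b₀).symm.trans hcard)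
  have hmem : ∀ v ∈ insert θ s, v ∈ hins.extend hsub := fun v hv => hins.subset_extend hsub hv
  refine ⟨b₀.reindex e, e ⟨θ, hmem θ (mem_insert _ _)⟩, fun j => ?_, ?_, ?_⟩
  · rw [Basis.reindex_apply, hb₀]
    exact hins.extend_subset hsub (e.symm j).2
  · rw [Basis.reindex_apply, hb₀]
    simp
  · rw [← hspan]
    refine span_mono fun v hv => ⟨e ⟨v, hmem v (mem_insert_of_mem _ hv)⟩, ?_, ?_⟩
    · intro h
      have hvθ : v = θ := congrArg Subtype.val (e.injective h)
      exact hθS (hspan ▸ subset_span (hvθ ▸ hv))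
    · rw [Basis.reindex_apply, hb₀]
      simp

/-- A determinant functional separating a vector of `Θ_r⁰` from a subspace spanned by other
vectors of `Θ_r⁰`. -/
lemma exists_separating_functional {M r : ℝ} (hM : 0 ≤ M) (hr : 0 < r)
    (hMB : ∀ x i, |dualCoord B x i| ≤ M * ‖x‖) (hspan : span ℝ (Theta0 B r) = ⊤)
    {S : Set (EuclideanSpace ℝ (Fin d))} (hS : S ⊆ Theta0 B r)
    {θ : EuclideanSpace ℝ (Fin d)} (hθ : θ ∈ Theta0 B r) (hθS : θ ∉ span ℝ S) :
    ∃ f : EuclideanSpace ℝ (Fin d) →ₗ[ℝ] ℝ, (∀ w ∈ span ℝ S, f w = 0) ∧ 1 ≤ |f θ| ∧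
      ∀ x, r * |f x| ≤ (d.factorial * (M * r) ^ d) * ‖x‖ := by
  obtain ⟨b, i, hbT, rfl, hbS⟩ := exists_basis_of_notMem_span hS hspan hθ hθS
  let m : Fin d → Fin d → ℝ := fun j => dualCoord B (b j)
  let f : EuclideanSpace ℝ (Fin d) →ₗ[ℝ] ℝ :=
    ((Matrix.detRowAlternating (n := Fin d) (R := ℝ)).toMultilinearMap.toLinearMap m i) ∘ₗ
      dualCoord B
  have hf : ∀ x, f x = Matrix.det (Matrix.of (Function.update m i (dualCoord B x))) := fun _ => rfl
  have hfi : f (b i) = Matrix.det (Matrix.of m) := by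
    rw [hf, show dualCoord B (b i) = m i from rfl, Function.update_eq_self]
  refine ⟨f, fun w hw => ?_, ?_, fun x => ?_⟩
  · have hle : span ℝ (b '' {j | j ≠ i}) ≤ LinearMap.ker f := by
      rw [span_le]
      rintro _ ⟨j, hj, rfl⟩
      have hj : j ≠ i := hj
      rw [SetLike.mem_coe, LinearMap.mem_ker, hf]
      refine Matrix.det_zero_of_row_eq hj (funext fun k => ?_)
      simp [Matrix.of_apply, Function.update_of_ne hj, m]
    exact hle (hbS hw)
  · have hne : Matrix.det (Matrix.of m) ≠ 0 := by
      refine (Matrix.linearIndependent_rows_iff_isUnit.1 ?_).map Matrix.detMonoidHom |>.ne_zero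
      exact b.linearIndependent.map' (dualCoord B) (LinearMap.ker_eq_bot.2 (dualCoord_injective B))
    choose k hk using fun j => exists_int_dualCoord_eq B (hbT j).1
    have hdet : Matrix.det (Matrix.of m) = ((Matrix.det (Matrix.of k) : ℤ) : ℝ) := by
      rw [Int.cast_det]
      congr 1
      ext j l
      exact hk j l
    rw [hfi, hdet]
    rw [hdet] at hne
    exact_mod_cast Int.one_le_abs (Int.cast_ne_zero.1 hne)
  · have hball : ∀ y, ‖y‖ ≤ r → |f y| ≤ d.factorial * (M * r) ^ d := by
      intro y hy
      have hle := Matrix.det_le (A := Matrix.of (Function.update m i (dualCoord B y)))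
        (abv := AbsoluteValue.abs) (x := M * r) (fun j l => ?_)
      · simpa [hf] using hle
      · rcases eq_or_ne j i with rfl | hj
        · simpa using (hMB y l).trans (by gcongr)
        · simpa [Function.update_of_ne hj] using (hMB (b j) l).trans (by gcongr; exact (hbT j).2)
    rcases eq_or_ne x 0 with rfl | hx
    · simp
    have hx0 : 0 < ‖x‖ := norm_pos_iff.2 hx
    have h := hball ((r / ‖x‖) • x) (by
      rw [norm_smul, norm_div, norm_norm, Real.norm_of_nonneg hr.le, div_mul_cancel₀ _ hx0.ne'])
    rwa [map_smul, smul_eq_mul, abs_mul, abs_div, abs_norm, abs_of_pos hr, div_mul_eq_mul_div,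
      div_le_iff₀ hx0] at h

/-- Counting dual lattice points in a ball through their integer coordinates. -/
lemma finite_and_ncard_le_of_subset_dualLattice {M R : ℝ} (hM : 0 ≤ M)
    (hMB : ∀ x i, |dualCoord B x i| ≤ M * ‖x‖) (hR : 1 ≤ M * R)
    {N : Set (EuclideanSpace ℝ (Fin d))} (hN : N ⊆ dualLattice B) (hNR : ∀ m ∈ N, ‖m‖ ≤ R) :
    N.Finite ∧ (N.ncard : ℝ) ≤ (3 * (M * R)) ^ d := by
  let c : EuclideanSpace ℝ (Fin d) → Fin d → ℤ := fun x i => round (dualCoord B x i)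
  have hc : ∀ x ∈ N, ∀ i, dualCoord B x i = c x i := by
    intro x hx i
    obtain ⟨k, hk⟩ := exists_int_dualCoord_eq B (hN hx) i
    simp [c, hk]
  let n : ℕ := ⌊M * R⌋₊
  let T : Finset (Fin d → ℤ) := Fintype.piFinset fun _ => Finset.Icc (-(n : ℤ)) n
  have hmaps : MapsTo c N T := by
    intro x hx
    refine Finset.mem_coe.2 (Fintype.mem_piFinset.2 fun i => Finset.mem_Icc.2 (abs_le.1 ?_))
    have h : |((c x i : ℤ) : ℝ)| ≤ M * R := by
      rw [← hc x hx i]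
      exact (hMB x i).trans (by gcongr; exact hNR x hx)
    have h' : (((c x i).natAbs : ℕ) : ℝ) ≤ M * R := by rwa [Nat.cast_natAbs, Int.cast_abs]
    have hle := Nat.le_floor h'
    rw [Int.abs_eq_natAbs]
    exact_mod_cast hle
  have hinj : InjOn c N := by
    intro x hx y hy hxy
    refine dualCoord_injective B (funext fun i => ?_)
    rw [hc x hx i, hc y hy i, hxy]
  refine ⟨Set.Finite.of_injOn hmaps hinj T.finite_toSet, ?_⟩
  have hcard : N.ncard ≤ (2 * n + 1) ^ d := by
    have hle := ncard_le_ncard_of_injOn c hmaps hinj T.finite_toSet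
    rw [ncard_coe_finset, Fintype.card_piFinset_const, Int.card_Icc] at hle
    convert hle using 2
    omega
  calc (N.ncard : ℝ) ≤ (2 * n + 1) ^ d := by exact_mod_cast hcard
    _ ≤ (3 * (M * R)) ^ d := by
      gcongr
      have : (n : ℝ) ≤ M * R := Nat.floor_le (by linarith)
      linarith

end DualCoordinates

lemma resN_subset_dualLattice {B : Basis (Fin d) ℝ (EuclideanSpace ℝ (Fin d))} {ρ a r : ℝ}
    {ξ : EuclideanSpace ℝ (Fin d)} : resN B ρ a r ξ ⊆ dualLattice B := by
  have key : ∀ η ∈ Ups B ρ a r ξ, η - ξ ∈ dualLattice B := by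
    intro η hη
    induction hη with
    | refl => exact fun g _ => ⟨0, by simp⟩
    | @tail x y _ h ih =>
      obtain ⟨θ, hθ, -, -, l, hl⟩ := h
      intro g hg
      obtain ⟨k, hk⟩ := ih g hg
      obtain ⟨j, hj⟩ := hθ.1 g hg
      refine ⟨k - l * j, ?_⟩
      rw [show y - ξ = (x - ξ) - (l : ℝ) • θ by rw [← hl]; abel, inner_sub_left, hk,
        real_inner_smul_left, hj]
      push_cast
      ring
  intro m hm
  simpa using key _ hm

/-- Lemma 5.5: there is C = C(d,Γ) > 0 such that, under the standing
parameter conditions, for every ξ: (i) |ξ − η| ≤ C ρ^{α₁} r^{(d−1)d} for all η ∈ Υ(ξ);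
(ii) |m| ≤ C ρ^{α₁} r^{d(d−1)} for all m ∈ N(ξ); (iii) N(ξ) is finite with
card N(ξ) ≤ C ρ^{dα₁} r^{d²(d−1)}. -/
theorem ups_diam_and_card_bound
    (d : ℕ) (hd : 2 ≤ d) (B : Basis (Fin d) ℝ (EuclideanSpace ℝ (Fin d))) :
    ∃ C : ℝ, 0 < C ∧ ∀ (ρ r κ : ℝ) (α : ℕ → ℝ), GoodParams B ρ r κ α →
      ∀ ξ : EuclideanSpace ℝ (Fin d),
        (∀ η ∈ Ups B ρ (α 1) r ξ, ‖ξ - η‖ ≤ C * ρ ^ α 1 * r ^ ((d - 1) * d)) ∧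
        (∀ m ∈ resN B ρ (α 1) r ξ, ‖m‖ ≤ C * ρ ^ α 1 * r ^ (d * (d - 1))) ∧
        (resN B ρ (α 1) r ξ).Finite ∧
        ((resN B ρ (α 1) r ξ).ncard : ℝ) ≤ C * ρ ^ ((d : ℝ) * α 1) * r ^ (d ^ 2 * (d - 1)) := by
  obtain ⟨M, hM1, hMB⟩ := exists_abs_dualCoord_le B
  have hM0 : 0 < M := by linarith
  have hfac : (1 : ℝ) ≤ d.factorial := by exact_mod_cast d.factorial_pos
  let C₁ : ℝ := 2 * (5 * (d.factorial * M ^ d)) ^ (d - 1)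
  have hC₁ : 0 < C₁ := by positivity
  refine ⟨C₁ + (3 * (M * C₁)) ^ d, by positivity, ?_⟩
  rintro ρ r κ α ⟨hρ, hκ, hα0, hα, -, -, hspan⟩ ξ
  have hMr : 1 ≤ M * r := one_le_mul_of_span_theta0_eq_top (by omega) hM0.le hMB hspan
  have hr : 0 < r := pos_of_mul_pos_right (by linarith) hM0.le
  have hα1 : 0 ≤ α 1 := by
    have h := hα 0 (by omega)
    rw [hα0] at h
    have : 0 ≤ 2 * κ * (d : ℝ) ^ 2 := by positivity
    simp only [zero_add] at h
    linarith
  have hL1 : 1 ≤ ρ ^ α 1 := Real.one_le_rpow hρ hα1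
  set A : ℝ := d.factorial * (M * r) ^ d with hA
  have hA1 : 1 ≤ A := one_le_mul_of_one_le_of_one_le hfac (one_le_pow₀ hMr)
  set R : ℝ := C₁ * ρ ^ α 1 * r ^ (d * (d - 1)) with hR
  have hRA : 2 * (ρ ^ α 1 * (5 * A) ^ (d - 1)) = R := by
    rw [hR, hA, pow_mul]
    simp only [C₁]
    rw [show 5 * ((d.factorial : ℝ) * (M * r) ^ d) = (5 * (d.factorial * M ^ d)) * r ^ d by ring,
      mul_pow _ (r ^ d)]
    ring
  have hdiam : ∀ η ∈ Ups B ρ (α 1) r ξ, ‖ξ - η‖ ≤ R := by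
    intro η hη
    obtain ⟨V, hV, hups⟩ := exists_isFilled_ups_subset B ρ (α 1) r ξ
    have hbound : ∀ x, IsFilled B ρ (α 1) r V x → ∀ w ∈ V, |⟪x, w⟫| ≤ _ := fun x hx =>
      hx.abs_inner_le (A := A) (by linarith) hr.le hA1 fun S hS θ hθ hθS =>
        exists_separating_functional hM0.le hr hMB hspan hS hθ hθS
    have hle := norm_sub_le_of_abs_inner_le (by positivity) (sub_mem_of_reflTransGen (hups η hη))
      (hbound ξ hV) (hbound η (hV.of_reflTransGen (hups η hη)))
    refine hle.trans (le_of_le_of_eq ?_ hRA)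
    have hrank : finrank ℝ V ≤ d := by simpa using V.finrank_le
    gcongr
    linarith
  have hN : ∀ m ∈ resN B ρ (α 1) r ξ, ‖m‖ ≤ R := by
    intro m hm
    simpa using hdiam _ hm
  have hRle : R ≤ (C₁ + (3 * (M * C₁)) ^ d) * ρ ^ α 1 * r ^ (d * (d - 1)) := by
    rw [hR]
    gcongr
    exact le_add_of_nonneg_right (by positivity)
  have hMR : 1 ≤ M * R := by
    have hR1 : 1 ≤ R := by
      rw [← hRA]
      have := one_le_mul_of_one_le_of_one_le hL1
        (one_le_pow₀ (n := d - 1) (show 1 ≤ 5 * A by linarith))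
      linarith
    exact one_le_mul_of_one_le_of_one_le hM1 hR1
  obtain ⟨hfin, hcard⟩ :=
    finite_and_ncard_le_of_subset_dualLattice hM0.le hMB hMR resN_subset_dualLattice hN
  refine ⟨fun η hη => ?_, fun m hm => (hN m hm).trans hRle, hfin, hcard.trans ?_⟩
  · rw [mul_comm (d - 1) d]
    exact (hdiam η hη).trans hRle
  · have hpow : (3 * (M * R)) ^ d =
        (3 * (M * C₁)) ^ d * ρ ^ ((d : ℝ) * α 1) * r ^ (d ^ 2 * (d - 1)) := by
      rw [mul_comm (d : ℝ), Real.rpow_mul (by linarith), Real.rpow_natCast,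
        show d ^ 2 * (d - 1) = (d * (d - 1)) * d by ring, pow_mul r, ← mul_pow, ← mul_pow, hR]
      congr 1
      ring
    rw [hpow]
    gcongr
    exact le_add_of_nonneg_left hC₁.le
end
end
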